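/- Let n ∈ ℕ, p⃗, q⃗ ∈ (0,∞)^n and α⃗ ∈ ℝⁿ. Then the set C_c(ℝⁿ) ∩ Ė^{α⃗,p⃗}_{q⃗}(ℝⁿ) of compactly supported continuous functions belonging to Ė^{α⃗,p⃗}_{q⃗}(ℝⁿ) is dense in Ė^{α⃗,p⃗}_{q⃗}(ℝⁿ): for every f ∈ Ė^{α⃗,p⃗}_{q⃗}(ℝⁿ) and every ε > 0 there exists a compactly supported continuous g ∈ Ė^{α⃗,p⃗}_{q⃗}(ℝⁿ) with ‖f - g‖_{Ė^{α⃗,p⃗}_{q⃗}(ℝⁿ)} < ε. -/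

import Mathlib

open MeasureTheory ENNReal Filter

noncomputable section

/-- The dyadic annulus `R_k = (-2^k, 2^k) \ (-2^(k-1), 2^(k-1))` in `ℝ`. -/
def herzRing (k : ℤ) : Set ℝ :=
  Set.Ioo (-(2 : ℝ) ^ k) ((2 : ℝ) ^ k) \ Set.Ioo (-(2 : ℝ) ^ (k - 1)) ((2 : ℝ) ^ (k - 1))

/-- The `L^q` "norm" (valued in `ℝ≥0∞`) of an `ℝ≥0∞`-valued function on a set `s ⊆ ℝ`,
with the usual modification when `q = ∞`. -/
def lqNormOn (q : ℝ≥0∞) (s : Set ℝ) (g : ℝ → ℝ≥0∞) : ℝ≥0∞ :=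
  if q = ∞ then essSup (s.indicator g) volume
  else (∫⁻ x in s, g x ^ q.toReal) ^ (1 / q.toReal)

/-- The `l^p` norm over `ℤ` of an `ℝ≥0∞`-valued sequence, with the usual modification
when `p = ∞`. -/
def lpZNorm (p : ℝ≥0∞) (a : ℤ → ℝ≥0∞) : ℝ≥0∞ :=
  if p = ∞ then ⨆ k, a k
  else (∑' k : ℤ, a k ^ p.toReal) ^ (1 / p.toReal)

/-- The one-dimensional Herz norm `K^{α,p}_q` of an `ℝ≥0∞`-valued function on `ℝ`. -/
def herzNorm1 (α : ℝ) (p q : ℝ≥0∞) (g : ℝ → ℝ≥0∞) : ℝ≥0∞ :=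
  lpZNorm p fun k => ENNReal.ofReal ((2 : ℝ) ^ ((k : ℝ) * α)) * lqNormOn q (herzRing k) g

/-- The mixed-norm Herz norm on `ℝⁿ` of an `ℝ≥0∞`-valued function: the Herz norm
`K^{α_1,p_1}_{q_1}` is applied in the first variable, then `K^{α_2,p_2}_{q_2}` in the
second variable, …, and finally `K^{α_n,p_n}_{q_n}` in the last variable. -/
def mixedHerzNormE : (n : ℕ) → (Fin n → ℝ) → (Fin n → ℝ≥0∞) → (Fin n → ℝ≥0∞) →
    ((Fin n → ℝ) → ℝ≥0∞) → ℝ≥0∞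
  | 0, _, _, _, f => f fun i => i.elim0
  | n + 1, α, p, q, f =>
    herzNorm1 (α (Fin.last n)) (p (Fin.last n)) (q (Fin.last n)) fun xlast =>
      mixedHerzNormE n (Fin.init α) (Fin.init p) (Fin.init q) fun y => f (Fin.snoc y xlast)

/-- The mixed-norm Herz norm `‖f‖_{Ė^{α,p}_q(ℝⁿ)}` of a complex-valued function on `ℝⁿ`. -/
def herzNormC (n : ℕ) (α : Fin n → ℝ) (p q : Fin n → ℝ≥0∞) (f : (Fin n → ℝ) → ℂ) : ℝ≥0∞ :=
  mixedHerzNormE n α p q fun x => (‖f x‖₊ : ℝ≥0∞)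

/-- `I_m = (-2^m, -2^{-m}] ∪ [2^{-m}, 2^m)`. -/
def herzI (m : ℕ) : Set ℝ :=
  Set.Ioc (-(2 : ℝ) ^ (m : ℤ)) (-(2 : ℝ) ^ (-(m : ℤ))) ∪
    Set.Ico ((2 : ℝ) ^ (-(m : ℤ))) ((2 : ℝ) ^ (m : ℤ))

/-- `A_m = I_m^n ⊆ ℝⁿ`. -/
def herzA (n m : ℕ) : Set (Fin n → ℝ) := Set.univ.pi fun _ => herzI m

/-- The class `H(ℝⁿ)` of simple functions built from finitely many pairwise disjoint
parallelepipeds contained in some `A_m`. -/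
def IsHSimple (n : ℕ) (f : (Fin n → ℝ) → ℂ) : Prop :=
  ∃ (m N : ℕ) (a : Fin N → ℂ) (E : Fin N → Fin n → Set ℝ),
    (∀ k i, MeasurableSet (E k i)) ∧
    (∀ k, Set.univ.pi (E k) ⊆ herzA n m) ∧
    (Pairwise fun k l => Disjoint (Set.univ.pi (E k)) (Set.univ.pi (E l))) ∧
    f = fun x => ∑ k, (Set.univ.pi (E k)).indicator (fun _ => a k) x

/-- The Euclidean ball `B(x,r)` in `ℝⁿ`. -/
def eucBall (n : ℕ) (x : Fin n → ℝ) (r : ℝ) : Set (Fin n → ℝ) :=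
  {y | ∑ i, (y i - x i) ^ 2 < r ^ 2}

/-- The (uncentered) maximal operator in the `k`-th variable. -/
def maxVar (n : ℕ) (k : Fin n) (g : (Fin n → ℝ) → ℝ≥0∞) : (Fin n → ℝ) → ℝ≥0∞ :=
  fun x => ⨆ (a : ℝ) (b : ℝ) (_ : x k ∈ Set.Ioo a b),
    (volume (Set.Ioo a b))⁻¹ * ∫⁻ y in Set.Ioo a b, g (Function.update x k y)

/-- The centered Hardy–Littlewood maximal operator on `ℝⁿ`. -/
def centeredMax (n : ℕ) (g : (Fin n → ℝ) → ℝ≥0∞) : (Fin n → ℝ) → ℝ≥0∞ :=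
  fun x => ⨆ (r : ℝ) (_ : 0 < r),
    (volume (eucBall n x r))⁻¹ * ∫⁻ y in eucBall n x r, g y

/-- The composition `M_n ∘ ⋯ ∘ M_1` of the maximal operators in each variable. -/
def iteratedMax (n : ℕ) (g : (Fin n → ℝ) → ℝ≥0∞) : (Fin n → ℝ) → ℝ≥0∞ :=
  (List.ofFn fun k : Fin n => maxVar n k).foldl (fun h F => F h) g

/-- The iterated maximal operator `ℳ_t(f) = [M_n ⋯ M_1(|f|^t)]^{1/t}`. -/
def iterMaxPow (n : ℕ) (t : ℝ) (f : (Fin n → ℝ) → ℂ) : (Fin n → ℝ) → ℝ≥0∞ :=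
  fun x => iteratedMax n (fun y => (‖f y‖₊ : ℝ≥0∞) ^ t) x ^ (1 / t)

/-- The `l^r`-Herz type mixed norm of a sequence of functions on `ℝⁿ`. -/
def herzSeqNorm (n : ℕ) (r : ℝ≥0∞) (α : Fin n → ℝ) (p q : Fin n → ℝ≥0∞)
    (F : ℤ → (Fin n → ℝ) → ℂ) : ℝ≥0∞ :=
  mixedHerzNormE n α p q fun x => lpZNorm r fun j => (‖F j x‖₊ : ℝ≥0∞)

/-- `N` is a ball quasi-Banach function norm on (nonnegative extended-real-valued)
measurable functions on `ℝⁿ`. -/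
def IsBQBFNorm (n : ℕ) (N : ((Fin n → ℝ) → ℝ≥0∞) → ℝ≥0∞) : Prop :=
  (∀ f : (Fin n → ℝ) → ℝ≥0∞, Measurable f → N f = 0 → f =ᵐ[volume] 0) ∧
  (∀ f g : (Fin n → ℝ) → ℝ≥0∞, Measurable f → Measurable g →
    (∀ᵐ x ∂volume, g x ≤ f x) → N g ≤ N f) ∧
  (∀ (fm : ℕ → (Fin n → ℝ) → ℝ≥0∞) (f : (Fin n → ℝ) → ℝ≥0∞),
    (∀ m, Measurable (fm m)) → Measurable f →
    (∀ᵐ x ∂volume, Monotone (fun m => fm m x) ∧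
      Tendsto (fun m => fm m x) atTop (nhds (f x))) →
    Monotone (fun m => N (fm m)) ∧ Tendsto (fun m => N (fm m)) atTop (nhds (N f))) ∧
  (∀ (x : Fin n → ℝ) (r : ℝ), 0 < r →
    N ((eucBall n x r).indicator fun _ => (1 : ℝ≥0∞)) ≠ ∞)

/-- `N` is a ball Banach function norm: a ball quasi-Banach function norm that moreover
satisfies the triangle inequality and locally dominates the `L¹` norm. -/
def IsBallBanachNorm (n : ℕ) (N : ((Fin n → ℝ) → ℝ≥0∞) → ℝ≥0∞) : Prop :=
  IsBQBFNorm n N ∧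
  (∀ f g : (Fin n → ℝ) → ℝ≥0∞, Measurable f → Measurable g → N (f + g) ≤ N f + N g) ∧
  (∀ (x : Fin n → ℝ) (r : ℝ), 0 < r → ∃ C : ℝ≥0∞, 0 < C ∧ C ≠ ∞ ∧
    ∀ f : (Fin n → ℝ) → ℝ≥0∞, Measurable f → (∫⁻ y in eucBall n x r, f y) ≤ C * N f)

/-- The associate (Köthe dual) norm of a function norm `N`. -/
def assocNormOf (n : ℕ) (N : ((Fin n → ℝ) → ℝ≥0∞) → ℝ≥0∞)
    (f : (Fin n → ℝ) → ℝ≥0∞) : ℝ≥0∞ :=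
  ⨆ (g : (Fin n → ℝ) → ℝ≥0∞) (_ : Measurable g) (_ : N g = 1), ∫⁻ x, f x * g x

/-- The `θ`-convexification of a function norm: `‖f‖_{X^θ} = ‖|f|^θ‖_X^{1/θ}`
(here stated with `θ` in place of `1/p`, so `X^{1/p}` is `convexPow n (1/p) N`). -/
def convexPow (n : ℕ) (θ : ℝ) (N : ((Fin n → ℝ) → ℝ≥0∞) → ℝ≥0∞)
    (f : (Fin n → ℝ) → ℝ≥0∞) : ℝ≥0∞ :=
  N (fun x => f x ^ θ) ^ (1 / θ)

/-- The associate space norm of the mixed-norm Herz space, for complex-valued functions. -/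
def herzAssocNormC (n : ℕ) (α : Fin n → ℝ) (p q : Fin n → ℝ≥0∞)
    (f : (Fin n → ℝ) → ℂ) : ℝ≥0∞ :=
  ⨆ (g : (Fin n → ℝ) → ℂ) (_ : Measurable g) (_ : herzNormC n α p q g = 1),
    ∫⁻ x, (‖f x * g x‖₊ : ℝ≥0∞)

lemma hz_eq (α : ℝ) (p q : ℝ≥0∞) (hp : p ≠ ∞) (hq : q ≠ ∞) (g : ℝ → ℝ≥0∞) :
    herzNorm1 α p q g = (∑' k : ℤ, (ENNReal.ofReal ((2 : ℝ) ^ ((k : ℝ) * α)) *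
      (∫⁻ x in herzRing k, g x ^ q.toReal) ^ (1 / q.toReal)) ^ p.toReal) ^ (1 / p.toReal) := by
  simp [herzNorm1, lpZNorm, lqNormOn, hp, hq]

lemma hz_meas_ring (k : ℤ) : MeasurableSet (herzRing k) :=
  measurableSet_Ioo.diff measurableSet_Ioo

lemma hz1_mono (α : ℝ) (p q : ℝ≥0∞) (hp : p ≠ ∞) (hq : q ≠ ∞) {g h : ℝ → ℝ≥0∞}
    (hgh : ∀ x, g x ≤ h x) : herzNorm1 α p q g ≤ herzNorm1 α p q h := by
  rw [hz_eq _ _ _ hp hq, hz_eq _ _ _ hp hq]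
  have h0 : 0 ≤ q.toReal := ENNReal.toReal_nonneg
  have h1 : 0 ≤ p.toReal := ENNReal.toReal_nonneg
  refine ENNReal.rpow_le_rpow (ENNReal.tsum_le_tsum fun k => ?_) (by positivity)
  refine ENNReal.rpow_le_rpow (mul_le_mul_right ?_ _) h1
  refine ENNReal.rpow_le_rpow (lintegral_mono fun x => ?_) (by positivity)
  exact ENNReal.rpow_le_rpow (hgh x) h0

lemma hzN_mono : ∀ (n : ℕ) (α : Fin n → ℝ) (p q : Fin n → ℝ≥0∞) (_ : ∀ i, p i ≠ ∞)
    (_ : ∀ i, q i ≠ ∞) {f g : (Fin n → ℝ) → ℝ≥0∞} (_ : ∀ x, f x ≤ g x),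
    mixedHerzNormE n α p q f ≤ mixedHerzNormE n α p q g
  | 0, _, _, _, _, _, _, _, h => h _
  | n + 1, α, p, q, hp, hq, f, g, h => by
    simp only [mixedHerzNormE]
    exact hz1_mono _ _ _ (hp _) (hq _) fun t =>
      hzN_mono n _ _ _ (fun i => hp _) (fun i => hq _) fun y => h _

lemma hz1_zero (α : ℝ) (p q : ℝ≥0∞) (hp : p ≠ ∞) (hq : q ≠ ∞) (hp0 : p ≠ 0) (hq0 : q ≠ 0) :
    herzNorm1 α p q (fun _ => 0) = 0 := by
  rw [hz_eq _ _ _ hp hq]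
  have h0 : 0 < q.toReal := ENNReal.toReal_pos hq0 hq
  have h1 : 0 < p.toReal := ENNReal.toReal_pos hp0 hp
  simp [h0, h1]

lemma hzN_zero : ∀ (n : ℕ) (α : Fin n → ℝ) (p q : Fin n → ℝ≥0∞) (_ : ∀ i, p i ≠ ∞)
    (_ : ∀ i, q i ≠ ∞) (_ : ∀ i, p i ≠ 0) (_ : ∀ i, q i ≠ 0),
    mixedHerzNormE n α p q (fun _ => 0) = 0
  | 0, _, _, _, _, _, _, _ => rfl
  | n + 1, α, p, q, hp, hq, hp0, hq0 => by
    simp only [mixedHerzNormE]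
    rw [hzN_zero n (Fin.init α) (Fin.init p) (Fin.init q) (fun i => hp _) (fun i => hq _) (fun i => hp0 _) (fun i => hq0 _)]
    exact hz1_zero _ _ _ (hp _) (hq _) (hp0 _) (hq0 _)

lemma hz1_meas {β : Type*} [MeasurableSpace β] (α : ℝ) (p q : ℝ≥0∞) (hp : p ≠ ∞) (hq : q ≠ ∞)
    {F : β → ℝ → ℝ≥0∞} (hF : Measurable (Function.uncurry F)) :
    Measurable fun b => herzNorm1 α p q (F b) := by
  simp_rw [hz_eq _ _ _ hp hq]
  refine Measurable.pow_const (Measurable.tsum fun k => ?_) _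
  refine Measurable.pow_const (Measurable.const_mul ?_ _) _
  refine Measurable.pow_const ?_ _
  exact Measurable.lintegral_prod_right' (f := fun z : β × ℝ => F z.1 z.2 ^ q.toReal)
    (hF.pow_const _)

lemma hz_meas_snoc (n : ℕ) : Measurable fun z : ℝ × (Fin n → ℝ) =>
    (Fin.snoc z.2 z.1 : Fin (n + 1) → ℝ) := by
  rw [measurable_pi_iff]
  intro i
  refine Fin.lastCases ?_ (fun j => ?_) i
  · simpa using measurable_fst
  · simp only [Fin.snoc_castSucc]
    exact (measurable_pi_apply j).comp measurable_snd

lemma hzN_meas : ∀ (n : ℕ) {β : Type} [MeasurableSpace β] (α : Fin n → ℝ) (p q : Fin n → ℝ≥0∞)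
    (_ : ∀ i, p i ≠ ∞) (_ : ∀ i, q i ≠ ∞) {F : β → (Fin n → ℝ) → ℝ≥0∞}
    (_ : Measurable (Function.uncurry F)), Measurable fun b => mixedHerzNormE n α p q (F b)
  | 0, β, _, _, _, _, _, _, F, h => by
    simp only [mixedHerzNormE]
    exact h.comp (measurable_id.prodMk measurable_const)
  | n + 1, β, _, α, p, q, hp, hq, F, h => by
    simp only [mixedHerzNormE]
    refine hz1_meas _ _ _ (hp _) (hq _) ?_
    refine hzN_meas n (β := β × ℝ) _ _ _ (fun i => hp _) (fun i => hq _)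
      (F := fun z y => F z.1 (Fin.snoc y z.2)) ?_
    exact h.comp ((measurable_fst.comp measurable_fst).prodMk
      ((hz_meas_snoc n).comp ((measurable_snd.comp measurable_fst).prodMk measurable_snd)))

lemma hzN_meas_slice (n : ℕ) (α : Fin n → ℝ) (p q : Fin n → ℝ≥0∞)
    (hp : ∀ i, p i ≠ ∞) (hq : ∀ i, q i ≠ ∞) {f : (Fin (n + 1) → ℝ) → ℝ≥0∞}
    (hf : Measurable f) :
    Measurable fun t : ℝ => mixedHerzNormE n α p q fun y => f (Fin.snoc y t) :=
  hzN_meas n (β := ℝ) α p q hp hq (F := fun t y => f (Fin.snoc y t)) (hf.comp (hz_meas_snoc n))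

lemma hz_rpow_add (r : ℝ) (hr : 0 ≤ r) (a b : ℝ≥0∞) : (a + b) ^ r ≤ 2 ^ r * (a ^ r + b ^ r) := by
  rcases le_total a b with h | h
  · calc (a + b) ^ r ≤ (2 * b) ^ r := ENNReal.rpow_le_rpow (by rw [two_mul]; gcongr) hr
      _ = 2 ^ r * b ^ r := ENNReal.mul_rpow_of_nonneg _ _ hr
      _ ≤ _ := by gcongr; exact le_add_self
  · calc (a + b) ^ r ≤ (2 * a) ^ r := ENNReal.rpow_le_rpow (by rw [two_mul]; gcongr) hr
      _ = 2 ^ r * a ^ r := ENNReal.mul_rpow_of_nonneg _ _ hr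
      _ ≤ _ := by gcongr; exact le_self_add

lemma hz_rpow_add' (r : ℝ) (hr : 0 ≤ r) {C a b h : ℝ≥0∞} (hh : h ≤ C * (a + b)) :
    h ^ r ≤ (C ^ r * 2 ^ r) * (a ^ r + b ^ r) := by
  calc h ^ r ≤ (C * (a + b)) ^ r := ENNReal.rpow_le_rpow hh hr
    _ = C ^ r * (a + b) ^ r := ENNReal.mul_rpow_of_nonneg _ _ hr
    _ ≤ C ^ r * (2 ^ r * (a ^ r + b ^ r)) := by gcongr; exact hz_rpow_add r hr a b
    _ = _ := by ring

lemma hz1_add (α : ℝ) (p q : ℝ≥0∞) (hp : p ≠ ∞) (hq : q ≠ ∞) (C : ℝ≥0∞) (hC : C ≠ ∞) :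
    ∃ C' : ℝ≥0∞, C' ≠ ∞ ∧ ∀ f g h : ℝ → ℝ≥0∞, Measurable f → (∀ x, h x ≤ C * (f x + g x)) →
      herzNorm1 α p q h ≤ C' * (herzNorm1 α p q f + herzNorm1 α p q g) := by
  have h0 : 0 ≤ q.toReal := ENNReal.toReal_nonneg
  have h1 : 0 ≤ p.toReal := ENNReal.toReal_nonneg
  have key : ∀ (r : ℝ), 0 ≤ r → ∀ C : ℝ≥0∞, C ≠ ∞ → C ^ r * 2 ^ r ≠ ∞ := fun r hr C hC =>
    ENNReal.mul_ne_top (ENNReal.rpow_ne_top_of_nonneg hr hC)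
      (ENNReal.rpow_ne_top_of_nonneg hr (by simp))
  have h0' : 0 ≤ 1 / q.toReal := by positivity
  have h1' : 0 ≤ 1 / p.toReal := by positivity
  refine ⟨_, key _ h1' _ (key _ h1 _ (key _ h0' _ (key _ h0 C hC))), ?_⟩
  intro f g h hf hh
  rw [hz_eq _ _ _ hp hq, hz_eq _ _ _ hp hq, hz_eq _ _ _ hp hq]
  refine hz_rpow_add' _ h1' ?_
  rw [← ENNReal.tsum_add, ← ENNReal.tsum_mul_left]
  refine ENNReal.tsum_le_tsum fun k => ?_
  refine hz_rpow_add' _ h1 ?_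
  rw [← mul_add, mul_left_comm]
  refine mul_le_mul_right ?_ _
  refine hz_rpow_add' _ h0' ?_
  rw [← lintegral_add_left (hf.pow_const _), ← lintegral_const_mul' _ _ (key _ h0 C hC)]
  exact lintegral_mono fun x => hz_rpow_add' _ h0 (hh x)

lemma hzN_add : ∀ (n : ℕ) (α : Fin n → ℝ) (p q : Fin n → ℝ≥0∞) (_ : ∀ i, p i ≠ ∞)
    (_ : ∀ i, q i ≠ ∞), ∃ C' : ℝ≥0∞, C' ≠ ∞ ∧ ∀ f g h : (Fin n → ℝ) → ℝ≥0∞, Measurable f →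
      (∀ x, h x ≤ f x + g x) →
      mixedHerzNormE n α p q h ≤ C' * (mixedHerzNormE n α p q f + mixedHerzNormE n α p q g)
  | 0, _, _, _, _, _ => ⟨1, by simp, fun f g h _ hh => by simpa [mixedHerzNormE] using hh _⟩
  | n + 1, α, p, q, hp, hq => by
    obtain ⟨C, hC, H⟩ := hzN_add n (Fin.init α) (Fin.init p) (Fin.init q)
      (fun i => hp _) (fun i => hq _)
    obtain ⟨C', hC', H'⟩ := hz1_add (α (Fin.last n)) (p (Fin.last n)) (q (Fin.last n))
      (hp _) (hq _) C hC
    refine ⟨C', hC', fun f g h hf hh => ?_⟩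
    simp only [mixedHerzNormE]
    refine H' _ _ _ (hzN_meas_slice n _ _ _ (fun i => hp _) (fun i => hq _) hf) fun t => ?_
    refine H _ _ _ ?_ fun y => hh _
    exact hf.comp ((hz_meas_snoc n).comp (measurable_const.prodMk measurable_id))

lemma hz1_dct (α : ℝ) (p q : ℝ≥0∞) (hp : p ≠ ∞) (hq : q ≠ ∞) (hp0 : p ≠ 0) (hq0 : q ≠ 0)
    (h : ℕ → ℝ → ℝ≥0∞) (H : ℝ → ℝ≥0∞) (hm : ∀ j, Measurable (h j)) (hM : Measurable H)
    (hle : ∀ j x, h j x ≤ H x) (hfin : herzNorm1 α p q H ≠ ∞)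
    (hlim : ∀ᵐ t, H t ≠ ∞ → Tendsto (fun j => h j t) atTop (nhds 0)) :
    Tendsto (fun j => herzNorm1 α p q (h j)) atTop (nhds 0) := by
  have h0 : 0 < q.toReal := ENNReal.toReal_pos hq0 hq
  have h1 : 0 < p.toReal := ENNReal.toReal_pos hp0 hp
  have h0' : 0 < 1 / q.toReal := by positivity
  have h1' : 0 < 1 / p.toReal := by positivity
  have key : ∀ (r : ℝ), 0 < r → ∀ {u : ℕ → ℝ≥0∞}, Tendsto u atTop (nhds 0) →
      Tendsto (fun j => u j ^ r) atTop (nhds 0) := by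
    intro r hr u hu
    have := ((ENNReal.continuous_rpow_const (y := r)).tendsto 0).comp hu
    simpa [ENNReal.zero_rpow_of_pos hr, Function.comp_def] using this
  simp_rw [hz_eq _ _ _ hp hq] at hfin ⊢
  have hs : (∑' k : ℤ, (ENNReal.ofReal ((2 : ℝ) ^ ((k : ℝ) * α)) *
      (∫⁻ x in herzRing k, H x ^ q.toReal) ^ (1 / q.toReal)) ^ p.toReal) ≠ ∞ := by
    intro hh
    rw [hh, ENNReal.top_rpow_of_pos h1'] at hfin
    exact hfin rfl
  refine key _ h1' ?_
  have hterm : ∀ k : ℤ, (∫⁻ x in herzRing k, H x ^ q.toReal) ≠ ∞ := by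
    intro k hk
    have := ENNReal.ne_top_of_tsum_ne_top hs k
    rw [hk, ENNReal.top_rpow_of_pos h0', ENNReal.mul_top, ENNReal.top_rpow_of_pos h1] at this
    · exact this rfl
    · have : (0 : ℝ) < 2 ^ ((k : ℝ) * α) := by positivity
      simpa using this
  have hz : (0 : ℝ≥0∞) = ∫⁻ _ : ℤ, 0 ∂Measure.count := by simp
  simp_rw [← lintegral_count] at hs ⊢
  rw [hz]
  refine tendsto_lintegral_of_dominated_convergence _ (fun j => measurable_of_countable _)
    (fun j => Eventually.of_forall fun k => ?_) hs (Eventually.of_forall fun k => ?_)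
  · refine ENNReal.rpow_le_rpow (mul_le_mul_right ?_ _) h1.le
    refine ENNReal.rpow_le_rpow (lintegral_mono fun x => ?_) h0'.le
    exact ENNReal.rpow_le_rpow (hle j x) h0.le
  · refine key _ h1 ?_
    rw [← mul_zero (ENNReal.ofReal ((2 : ℝ) ^ ((k : ℝ) * α)))]
    refine ENNReal.Tendsto.const_mul (key _ h0' ?_) (Or.inr ENNReal.ofReal_ne_top)
    have hz' : (0 : ℝ≥0∞) = ∫⁻ _ in herzRing k, 0 := by simp
    rw [hz']
    refine tendsto_lintegral_of_dominated_convergence _ (fun j => (hm j).pow_const _)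
      (fun j => Eventually.of_forall fun x => ENNReal.rpow_le_rpow (hle j x) h0.le)
      (hterm k) ?_
    filter_upwards [ae_restrict_of_ae hlim, ae_lt_top (hM.pow_const _) (hterm k)] with t ht ht'
    refine key _ h0 (ht fun hh => ?_)
    rw [hh, ENNReal.top_rpow_of_pos h0] at ht'
    exact lt_irrefl _ ht'

lemma hz_ae_slice (n : ℕ) {P : (Fin (n + 1) → ℝ) → Prop} (h : ∀ᵐ x, P x) :
    ∀ᵐ t : ℝ, ∀ᵐ y : Fin n → ℝ, P (Fin.snoc y t) := by
  have e := (volume_preserving_piFinSuccAbove (fun _ : Fin (n + 1) => ℝ) (Fin.last n)).symm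
  have h2 := e.quasiMeasurePreserving.ae h
  have h3 := Measure.ae_ae_of_ae_prod h2
  filter_upwards [h3] with t ht
  filter_upwards [ht] with y hy
  convert hy using 1
  simp [MeasurableEquiv.piFinSuccAbove, Fin.insertNthEquiv]

lemma hzN_dct : ∀ (n : ℕ) (α : Fin n → ℝ) (p q : Fin n → ℝ≥0∞) (_ : ∀ i, p i ≠ ∞)
    (_ : ∀ i, q i ≠ ∞) (_ : ∀ i, p i ≠ 0) (_ : ∀ i, q i ≠ 0)
    (F : ℕ → (Fin n → ℝ) → ℝ≥0∞) (G : (Fin n → ℝ) → ℝ≥0∞) (_ : ∀ j, Measurable (F j))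
    (_ : Measurable G) (_ : ∀ j x, F j x ≤ G x) (_ : mixedHerzNormE n α p q G ≠ ∞)
    (_ : ∀ᵐ x, Tendsto (fun j => F j x) atTop (nhds 0)),
    Tendsto (fun j => mixedHerzNormE n α p q (F j)) atTop (nhds 0)
  | 0, α, p, q, hp, hq, hp0, hq0, F, G, hF, hG, hle, hfin, hlim => by
    simp only [mixedHerzNormE]
    obtain ⟨x, hx⟩ := hlim.exists
    rwa [Subsingleton.elim x (fun i => i.elim0)] at hx
  | n + 1, α, p, q, hp, hq, hp0, hq0, F, G, hF, hG, hle, hfin, hlim => by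
    simp only [mixedHerzNormE] at hfin ⊢
    refine hz1_dct _ _ _ (hp _) (hq _) (hp0 _) (hq0 _) _ _
      (fun j => hzN_meas_slice n _ _ _ (fun i => hp _) (fun i => hq _) (hF j))
      (hzN_meas_slice n _ _ _ (fun i => hp _) (fun i => hq _) hG)
      (fun j t => hzN_mono n _ _ _ (fun i => hp _) (fun i => hq _) fun y => hle _ _) hfin ?_
    filter_upwards [hz_ae_slice n hlim] with t ht hfin'
    have hsn : Measurable fun y : Fin n → ℝ => (Fin.snoc y t : Fin (n + 1) → ℝ) :=
      (hz_meas_snoc n).comp (measurable_const.prodMk measurable_id)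
    exact hzN_dct n _ _ _ (fun i => hp _) (fun i => hq _) (fun i => hp0 _) (fun i => hq0 _)
      _ _ (fun j => (hF j).comp hsn) (hG.comp hsn) (fun j y => hle _ _) hfin' ht

def hzK1 (m : ℕ) : Set ℝ := {t | (2 : ℝ) ^ (-(m : ℤ)) ≤ |t| ∧ |t| ≤ (2 : ℝ) ^ (m : ℤ)}

def hzK (n m : ℕ) : Set (Fin n → ℝ) := {x | ∀ i, x i ∈ hzK1 m}

lemma hz1_fin (α : ℝ) (p q : ℝ≥0∞) (hp : p ≠ ∞) (hq : q ≠ ∞) (hp0 : p ≠ 0) (hq0 : q ≠ 0)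
    (m : ℕ) (M : ℝ≥0∞) (hM : M ≠ ∞) (h : ℝ → ℝ≥0∞) (hle : ∀ t, h t ≤ M)
    (hout : ∀ t, t ∉ hzK1 m → h t = 0) : herzNorm1 α p q h ≠ ∞ := by
  have h0 : 0 < q.toReal := ENNReal.toReal_pos hq0 hq
  have h1 : 0 < p.toReal := ENNReal.toReal_pos hp0 hp
  have h0' : 0 < 1 / q.toReal := by positivity
  have h1' : 0 < 1 / p.toReal := by positivity
  rw [hz_eq _ _ _ hp hq]
  refine ENNReal.rpow_ne_top_of_nonneg h1'.le ?_
  rw [tsum_eq_sum (s := Finset.Icc (-(m : ℤ)) (m + 1))]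
  · refine ENNReal.sum_ne_top.2 fun k _ => ?_
    refine ENNReal.rpow_ne_top_of_nonneg h1.le (ENNReal.mul_ne_top ENNReal.ofReal_ne_top ?_)
    refine ENNReal.rpow_ne_top_of_nonneg h0'.le (ne_top_of_le_ne_top ?_
      (lintegral_mono fun t => ENNReal.rpow_le_rpow (hle t) h0.le))
    rw [lintegral_const, Measure.restrict_apply_univ]
    refine ENNReal.mul_ne_top (ENNReal.rpow_ne_top_of_nonneg h0.le hM) ?_
    refine ne_top_of_le_ne_top ?_ (measure_mono Set.diff_subset)
    rw [Real.volume_Ioo]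
    exact ENNReal.ofReal_ne_top
  · intro k hk
    have : (∫⁻ x in herzRing k, h x ^ q.toReal) = 0 := by
      rw [setLIntegral_congr_fun (g := fun _ => 0) (hz_meas_ring k)]
      · simp
      · intro t ht
        have : h t = 0 := by
          refine hout t fun htK => hk ?_
          obtain ⟨hta, htb⟩ := ht
          have h2 : |t| < (2 : ℝ) ^ k := abs_lt.2 hta
          have h3 : (2 : ℝ) ^ (k - 1) ≤ |t| := by
            by_contra hc
            exact htb (abs_lt.1 (not_le.1 hc))
          have h4 := (zpow_lt_zpow_iff_right₀ (one_lt_two (α := ℝ))).1 (htK.1.trans_lt h2)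
          have h5 := (zpow_le_zpow_iff_right₀ (one_lt_two (α := ℝ))).1 (h3.trans htK.2)
          rw [Finset.mem_Icc]
          omega
        simp [this, h0]
    rw [this]
    simp [h0, h1]

lemma hzN_fin : ∀ (n : ℕ) (α : Fin n → ℝ) (p q : Fin n → ℝ≥0∞) (_ : ∀ i, p i ≠ ∞)
    (_ : ∀ i, q i ≠ ∞) (_ : ∀ i, p i ≠ 0) (_ : ∀ i, q i ≠ 0) (m : ℕ) (M : ℝ≥0∞) (_ : M ≠ ∞),
    mixedHerzNormE n α p q ((hzK n m).indicator fun _ => M) ≠ ∞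
  | 0, _, _, _, _, _, _, _, m, M, hM => by
    simp [mixedHerzNormE, hzK, Set.indicator, hM]
  | n + 1, α, p, q, hp, hq, hp0, hq0, m, M, hM => by
    simp only [mixedHerzNormE]
    refine hz1_fin _ _ _ (hp _) (hq _) (hp0 _) (hq0 _) m _
      (hzN_fin n (Fin.init α) (Fin.init p) (Fin.init q) (fun i => hp _) (fun i => hq _)
        (fun i => hp0 _) (fun i => hq0 _) m M hM) _ (fun t => ?_) (fun t ht => ?_)
    · refine hzN_mono n _ _ _ (fun i => hp _) (fun i => hq _) fun y => ?_
      by_cases hy : y ∈ hzK n m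
      · rw [Set.indicator_of_mem hy]
        exact Set.indicator_le_self _ _ _
      · rw [Set.indicator_of_notMem]
        · exact zero_le
        · intro hc
          refine hy fun i => ?_
          simpa using hc i.castSucc
    · rw [← hzN_zero n (Fin.init α) (Fin.init p) (Fin.init q) (fun i => hp _) (fun i => hq _)
        (fun i => hp0 _) (fun i => hq0 _)]
      congr 1
      ext y
      rw [Set.indicator_of_notMem]
      intro hc
      refine ht ?_
      simpa using hc (Fin.last n)

lemma hzK_closed (n m : ℕ) : IsClosed (hzK n m) := by
  have : hzK n m = ⋂ i, {x : Fin n → ℝ | (2 : ℝ) ^ (-(m : ℤ)) ≤ |x i|} ∩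
      {x | |x i| ≤ (2 : ℝ) ^ (m : ℤ)} := by
    ext x; simp [hzK, hzK1]
  rw [this]
  exact isClosed_iInter fun i => (isClosed_le continuous_const (by fun_prop)).inter
    (isClosed_le (by fun_prop) continuous_const)

lemma hzK_compact (n m : ℕ) : IsCompact (hzK n m) := by
  refine (isCompact_univ_pi (s := fun _ : Fin n => Set.Icc (-(2 : ℝ) ^ (m : ℤ)) ((2 : ℝ) ^ (m : ℤ)))
    fun i => isCompact_Icc).of_isClosed_subset (hzK_closed n m) ?_
  intro x hx i _
  exact abs_le.1 (hx i).2

lemma hz_cutoff (n m : ℕ) : ∃ χ : (Fin n → ℝ) → ℝ, Continuous χ ∧ (∀ x, 0 ≤ χ x ∧ χ x ≤ 1) ∧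
    (∀ x ∈ hzK n m, χ x = 1) ∧ (∀ x, x ∉ hzK n (m + 1) → χ x = 0) := by
  let U : Set (Fin n → ℝ) := ⋂ i, {x : Fin n → ℝ | (2 : ℝ) ^ (-((m + 1 : ℕ) : ℤ)) < |x i|} ∩
      {x | |x i| < (2 : ℝ) ^ ((m + 1 : ℕ) : ℤ)}
  have hU : IsOpen U := isOpen_iInter_of_finite fun i =>
    (isOpen_lt continuous_const (by fun_prop)).inter (isOpen_lt (by fun_prop) continuous_const)
  have hKU : hzK n m ⊆ U := by
    intro x hx
    refine Set.mem_iInter.2 fun i => ⟨lt_of_lt_of_le ?_ (hx i).1, lt_of_le_of_lt (hx i).2 ?_⟩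
    · exact zpow_lt_zpow_right₀ one_lt_two (by push_cast; omega)
    · exact zpow_lt_zpow_right₀ one_lt_two (by push_cast; omega)
  obtain ⟨χ, h0, h1, h2⟩ := exists_continuous_zero_one_of_isClosed hU.isClosed_compl
    (hzK_closed n m) (Set.disjoint_left.2 fun x hx hx' => hx (hKU hx'))
  refine ⟨χ, χ.continuous, fun x => h2 x, fun x hx => h1 hx, fun x hx => h0 fun hxU => hx ?_⟩
  intro i
  have := Set.mem_iInter.1 hxU i
  exact ⟨this.1.le, this.2.le⟩

lemma hz_exhaust (n : ℕ) (x : Fin n → ℝ) (hx : ∀ i, x i ≠ 0) :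
    ∀ᶠ m : ℕ in atTop, x ∈ hzK n m := by
  refine (Filter.eventually_all (p := fun (i : Fin n) (m : ℕ) => x i ∈ hzK1 m)).2 fun i => ?_
  have hpos : 0 < |x i| := abs_pos.2 (hx i)
  have h2 : Tendsto (fun m : ℕ => (2 : ℝ) ^ m) atTop atTop :=
    tendsto_pow_atTop_atTop_of_one_lt one_lt_two
  filter_upwards [h2.eventually_ge_atTop |x i|, h2.eventually_ge_atTop |x i|⁻¹] with m h3 h4
  refine ⟨?_, by simpa using h3⟩
  rw [zpow_neg, zpow_natCast]
  exact inv_le_of_inv_le₀ hpos h4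

lemma hz_ae_ne (n : ℕ) : ∀ᵐ x : Fin n → ℝ, ∀ i, x i ≠ 0 := by
  rw [ae_all_iff]
  intro i
  exact Measure.ae_eval_ne (fun _ : Fin n => (volume : Measure ℝ)) i 0

def hzRet (M : ℝ) (z : ℂ) : ℂ := ((M / max M ‖z‖ : ℝ) : ℂ) * z

lemma hzRet_cont (M : ℝ) (hM : 0 < M) : Continuous (hzRet M) := by
  unfold hzRet
  refine Continuous.mul (Complex.continuous_ofReal.comp ?_) continuous_id
  refine continuous_const.div (by fun_prop) fun z => ?_
  exact (lt_of_lt_of_le hM (le_max_left _ _)).ne'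

lemma hzRet_norm (M : ℝ) (hM : 0 < M) (z : ℂ) : ‖hzRet M z‖ ≤ M := by
  have h : 0 < max M ‖z‖ := lt_of_lt_of_le hM (le_max_left _ _)
  rw [hzRet, norm_mul, Complex.norm_real, Real.norm_of_nonneg (by positivity), div_mul_eq_mul_div,
    div_le_iff₀ h]
  gcongr
  exact le_max_right _ _

lemma hzRet_id (M : ℝ) (hM : 0 < M) (z : ℂ) (hz : ‖z‖ ≤ M) : hzRet M z = z := by
  rw [hzRet, max_eq_left hz, div_self hM.ne']; simp

lemma hz_approx (n m : ℕ) (M : ℝ) (hM : 0 < M) (f : (Fin n → ℝ) → ℂ) (hf : Measurable f)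
    (hb : ∀ x, ‖f x‖ ≤ M) (hs : ∀ x, x ∉ hzK n m → f x = 0) :
    ∃ g : ℕ → (Fin n → ℝ) → ℂ, (∀ j, Continuous (g j)) ∧ (∀ j x, ‖g j x‖ ≤ M) ∧
      (∀ j x, x ∉ hzK n (m + 1) → g j x = 0) ∧
      ∀ᵐ x, Tendsto (fun j => g j x) atTop (nhds (f x)) := by
  obtain ⟨χ, hχc, hχb, hχ1, hχ0⟩ := hz_cutoff n m
  have hL : MemLp f 1 (volume : Measure (Fin n → ℝ)) := by
    have hi : f = (hzK n m).indicator f := by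
      ext x
      by_cases hx : x ∈ hzK n m
      · simp [hx]
      · simp [hx, hs x hx]
    rw [hi, memLp_indicator_iff_restrict (hzK_closed n m).measurableSet]
    haveI : IsFiniteMeasure ((volume : Measure (Fin n → ℝ)).restrict (hzK n m)) :=
      ⟨by simpa using (hzK_compact n m).measure_lt_top⟩
    exact MemLp.of_bound hf.aestronglyMeasurable M (Eventually.of_forall hb)
  have hex : ∀ j : ℕ, ∃ g : (Fin n → ℝ) → ℂ, Continuous g ∧
      eLpNorm (f - g) 1 volume ≤ ((j : ℝ≥0∞) + 1)⁻¹ := by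
    intro j
    obtain ⟨g, _, h1, h2, _⟩ := hL.exists_hasCompactSupport_eLpNorm_sub_le (by simp)
      (ε := ((j : ℝ≥0∞) + 1)⁻¹) (by simp)
    exact ⟨g, h2, h1⟩
  choose g hgc hg using hex
  have hlim : Tendsto (fun j => eLpNorm (g j - f) 1 volume) atTop (nhds 0) := by
    refine tendsto_of_tendsto_of_tendsto_of_le_of_le tendsto_const_nhds
      (h := fun j : ℕ => ((j : ℝ≥0∞) + 1)⁻¹) ?_ (fun _ => zero_le) (fun j => ?_)
    · have := (tendsto_add_atTop_iff_nat 1).2 ENNReal.tendsto_inv_nat_nhds_zero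
      simpa using this
    · rw [eLpNorm_sub_comm]; exact hg j
  have hmeas := tendstoInMeasure_of_tendsto_eLpNorm one_ne_zero
    (fun j => (hgc j).aestronglyMeasurable) hf.aestronglyMeasurable hlim
  obtain ⟨ns, _, hns⟩ := hmeas.exists_seq_tendsto_ae
  refine ⟨fun j x => (χ x : ℂ) * hzRet M (g (ns j) x), fun j => ?_, fun j x => ?_,
    fun j x hx => by simp [hχ0 x hx], ?_⟩
  · exact (Complex.continuous_ofReal.comp hχc).mul ((hzRet_cont M hM).comp (hgc _))
  · rw [norm_mul, Complex.norm_real, Real.norm_of_nonneg (hχb x).1]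
    calc χ x * ‖hzRet M (g (ns j) x)‖ ≤ 1 * M := by
          gcongr
          · exact (hχb x).2
          · exact hzRet_norm M hM _
      _ = M := one_mul M
  · filter_upwards [hns] with x hx
    have h1 := (((hzRet_cont M hM).tendsto (f x)).comp hx).const_mul (χ x : ℂ)
    have h2 : (χ x : ℂ) * hzRet M (f x) = f x := by
      rw [hzRet_id M hM _ (hb x)]
      by_cases hxK : x ∈ hzK n m
      · simp [hχ1 x hxK]
      · simp [hs x hxK]
    rw [h2] at h1
    exact h1

/-- density of compactly supported continuous functions in the
mixed-norm Herz space. -/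
theorem mixedHerz_Cc_dense (n : ℕ) (p q α : Fin n → ℝ)
    (hp : ∀ i, 0 < p i) (hq : ∀ i, 0 < q i)
    (f : (Fin n → ℝ) → ℂ) (hf : Measurable f)
    (hfin : herzNormC n α (fun i => ENNReal.ofReal (p i))
      (fun i => ENNReal.ofReal (q i)) f ≠ ∞)
    (ε : ℝ≥0∞) (hε : 0 < ε) :
    ∃ g : (Fin n → ℝ) → ℂ, Continuous g ∧ HasCompactSupport g ∧
      herzNormC n α (fun i => ENNReal.ofReal (p i)) (fun i => ENNReal.ofReal (q i)) g ≠ ∞ ∧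
      herzNormC n α (fun i => ENNReal.ofReal (p i)) (fun i => ENNReal.ofReal (q i))
        (f - g) < ε := by
  classical
  set P : Fin n → ℝ≥0∞ := fun i => ENNReal.ofReal (p i) with hPdef
  set Q : Fin n → ℝ≥0∞ := fun i => ENNReal.ofReal (q i) with hQdef
  have hP : ∀ i, P i ≠ ∞ := fun i => ENNReal.ofReal_ne_top
  have hQ : ∀ i, Q i ≠ ∞ := fun i => ENNReal.ofReal_ne_top
  have hP0 : ∀ i, P i ≠ 0 := fun i => by simpa [hPdef] using hp i
  have hQ0 : ∀ i, Q i ≠ 0 := fun i => by simpa [hQdef] using hq i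
  obtain ⟨C, hC, hadd⟩ := hzN_add n α P Q hP hQ
  have hε2 : 0 < ε / 2 := ENNReal.half_pos hε.ne'
  let S : ℕ → Set (Fin n → ℝ) := fun m => hzK n m ∩ {x | ‖f x‖ ≤ (m : ℝ) + 1}
  have hS : ∀ m, MeasurableSet (S m) := fun m =>
    (hzK_closed n m).measurableSet.inter (measurableSet_le hf.norm measurable_const)
  let F : ℕ → (Fin n → ℝ) → ℂ := fun m => (S m).indicator f
  have hF : ∀ m, Measurable (F m) := fun m => hf.indicator (hS m)
  have hlim1 : Tendsto (fun m => mixedHerzNormE n α P Q fun x => (‖f x - F m x‖₊ : ℝ≥0∞))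
      atTop (nhds 0) := by
    refine hzN_dct n α P Q hP hQ hP0 hQ0 _ (fun x => (‖f x‖₊ : ℝ≥0∞))
      (fun m => (hf.sub (hF m)).nnnorm.coe_nnreal_ennreal) hf.nnnorm.coe_nnreal_ennreal
      (fun m x => ?_) hfin ?_
    · by_cases hx : x ∈ S m
      · simp [F, hx]
      · simp [F, hx]
    · filter_upwards [hz_ae_ne n] with x hx
      refine tendsto_const_nhds.congr' ?_
      filter_upwards [hz_exhaust n x hx,
        tendsto_natCast_atTop_atTop.eventually_ge_atTop ‖f x‖] with m h1 h2
      have hxS : x ∈ S m := ⟨h1, by simp only [Set.mem_setOf_eq]; linarith⟩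
      simp [F, hxS]
  have hlim1' : Tendsto (fun m => C * mixedHerzNormE n α P Q fun x => (‖f x - F m x‖₊ : ℝ≥0∞))
      atTop (nhds 0) := by
    simpa using ENNReal.Tendsto.const_mul hlim1 (Or.inr hC)
  obtain ⟨m, hm⟩ := (hlim1'.eventually (gt_mem_nhds hε2)).exists
  have hMpos : (0 : ℝ) < (m : ℝ) + 1 := by positivity
  have hFb : ∀ x, ‖F m x‖ ≤ (m : ℝ) + 1 := by
    intro x
    by_cases hx : x ∈ S m
    · simpa [F, hx] using hx.2
    · simpa [F, hx] using hMpos.le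
  have hFs : ∀ x, x ∉ hzK n m → F m x = 0 := by
    intro x hx
    have : x ∉ S m := fun h => hx h.1
    simp [F, this]
  obtain ⟨g, hgc, hgb, hgs, hglim⟩ := hz_approx n m _ hMpos (F m) (hF m) hFb hFs
  have hKK : ∀ x, x ∉ hzK n (m + 1) → x ∉ hzK n m := by
    intro x hx hx'
    refine hx fun i => ⟨le_trans ?_ (hx' i).1, le_trans (hx' i).2 ?_⟩
    · exact zpow_le_zpow_right₀ one_le_two (by push_cast; omega)
    · exact zpow_le_zpow_right₀ one_le_two (by push_cast; omega)
  have hlim2 : Tendsto (fun j => mixedHerzNormE n α P Q fun x => (‖F m x - g j x‖₊ : ℝ≥0∞))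
      atTop (nhds 0) := by
    refine hzN_dct n α P Q hP hQ hP0 hQ0 _
      ((hzK n (m + 1)).indicator fun _ => ENNReal.ofReal (((m : ℝ) + 1) + ((m : ℝ) + 1)))
      (fun j => ((hF m).sub (hgc j).measurable).nnnorm.coe_nnreal_ennreal)
      (measurable_const.indicator (hzK_closed n _).measurableSet)
      (fun j x => ?_) (hzN_fin n α P Q hP hQ hP0 hQ0 _ _ ENNReal.ofReal_ne_top) ?_
    · by_cases hx : x ∈ hzK n (m + 1)
      · rw [Set.indicator_of_mem hx, ← enorm_eq_nnnorm, ← ofReal_norm_eq_enorm]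
        exact ENNReal.ofReal_le_ofReal
          ((norm_sub_le _ _).trans (add_le_add (hFb x) (hgb j x)))
      · simp [hx, hgs j x hx, hFs x (hKK x hx)]
    · filter_upwards [hglim] with x hx
      have h1 : Tendsto (fun j => F m x - g j x) atTop (nhds 0) := by
        simpa using hx.const_sub (F m x)
      have h2 := h1.enorm
      simpa [enorm_eq_nnnorm] using h2
  have hlim2' : Tendsto (fun j => C * mixedHerzNormE n α P Q fun x => (‖F m x - g j x‖₊ : ℝ≥0∞))
      atTop (nhds 0) := by
    simpa using ENNReal.Tendsto.const_mul hlim2 (Or.inr hC)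
  obtain ⟨j, hj⟩ := (hlim2'.eventually (gt_mem_nhds hε2)).exists
  refine ⟨g j, hgc j, HasCompactSupport.intro (hzK_compact n (m + 1)) (fun x hx => hgs j x hx),
    ?_, ?_⟩
  · refine ne_top_of_le_ne_top (hzN_fin n α P Q hP hQ hP0 hQ0 (m + 1)
      (ENNReal.ofReal ((m : ℝ) + 1)) ENNReal.ofReal_ne_top) (hzN_mono n α P Q hP hQ fun x => ?_)
    by_cases hx : x ∈ hzK n (m + 1)
    · rw [Set.indicator_of_mem hx, ← enorm_eq_nnnorm, ← ofReal_norm_eq_enorm]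
      exact ENNReal.ofReal_le_ofReal (hgb j x)
    · simp [hx, hgs j x hx]
  · refine lt_of_le_of_lt (hadd (fun x => (‖f x - F m x‖₊ : ℝ≥0∞))
      (fun x => (‖F m x - g j x‖₊ : ℝ≥0∞)) _
      (hf.sub (hF m)).nnnorm.coe_nnreal_ennreal fun x => ?_) ?_
    · have : (f - g j) x = (f x - F m x) + (F m x - g j x) := by simp
      rw [this]
      exact_mod_cast nnnorm_add_le _ _
    · rw [mul_add, ← ENNReal.add_halves ε]
      exact ENNReal.add_lt_add hm hj
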